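/- Let n ≥ k ≥ 1, let r with 1 ≤ r < k, and let ε ∈ (0,1]. Let μ be a function from the k-element subsets of [n]={1,…,n} to the nonnegative reals, not identically zero. Suppose that for every λ ∈ ℝ^n_{≥0} and every C ⊆ [n] such that the density ν(W) := 1[C⊆W]·μ(W)·∏_{i∈W} λ_i on k-element subsets is not identically zero, the conductance of the k↔(k−r) down-up walk on ν is at least ε. Then μ satisfies weak (r, k^r/ε)-approximate exchange: for all k-element subsets S,T with μ(S) > 0, μ(T) > 0 and S ≠ T, there exist s ∈ {1,…,r} and U ∈ E^s(S,T) such that μ(S) ≤ (k^r/ε) · μ(S Δ U) · (μ(S)/μ(T))^{s/d(S,T)}. -/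

import Mathlib

open Finset

/-- The family of `k`-element subsets of `Fin n` (representing `[n] = {1,…,n}`). -/
def kSets (n k : ℕ) : Finset (Finset (Fin n)) :=
  Finset.univ.powersetCard k

/-- The stationary distribution `π = ν / (Σ_W ν(W))` of the down-up walk on the density `ν`. -/
noncomputable def piDist (n k : ℕ) (ν : Finset (Fin n) → ℝ) (S : Finset (Fin n)) : ℝ :=
  ν S / ∑ W ∈ kSets n k, ν W

/-- The transition probability of the `k ↔ (k-r)` down-up walk on the density `ν`:
`P(S,S') = Σ_{T ⊆ S ∩ S', |T| = k-r} binom(k, k-r)⁻¹ · ν(S') / (Σ_{W ⊇ T, |W| = k} ν(W))`. -/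
noncomputable def transP (n k r : ℕ) (ν : Finset (Fin n) → ℝ) (S S' : Finset (Fin n)) : ℝ :=
  ∑ T ∈ (S ∩ S').powersetCard (k - r),
    ((k.choose (k - r) : ℝ))⁻¹ * ν S' /
      ∑ W ∈ (kSets n k).filter (fun W => T ⊆ W), ν W

/-- "The conductance of the `k ↔ (k-r)` down-up walk on `ν` is at least `ε`": for every
collection `𝒮` of `k`-element subsets with `0 < π(𝒮) ≤ 1/2`, the ergodic flow out of `𝒮`
is at least `ε · π(𝒮)`. -/
def ConductanceGE (n k r : ℕ) (ν : Finset (Fin n) → ℝ) (ε : ℝ) : Prop :=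
  ∀ 𝒮 ⊆ kSets n k,
    0 < ∑ S ∈ 𝒮, piDist n k ν S →
    (∑ S ∈ 𝒮, piDist n k ν S) ≤ 1 / 2 →
    ε * ∑ S ∈ 𝒮, piDist n k ν S ≤
      ∑ S ∈ 𝒮, ∑ S' ∈ kSets n k \ 𝒮, piDist n k ν S * transP n k r ν S S'

/-- `E^i(S,T)`, the set of `i`-exchanges between `S` and `T`: subsets `U` of the symmetric
difference `S Δ T` with `|U ∩ S| = |U ∩ T| = i`. -/
def exch {n : ℕ} (S T : Finset (Fin n)) (i : ℕ) : Finset (Finset (Fin n)) :=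
  (symmDiff S T).powerset.filter (fun U => (U ∩ S).card = i ∧ (U ∩ T).card = i)

/-! Suppose `ν S ≤ ν T` and `ν` vanishes off the subsets of `S ∪ T`. Then `{S}` has stationary mass
at most `1/2`, so the walk leaves `S` with probability at least `ε`, and so it does conditionally on
its down-step landing in some `A ⊆ S` with `|A| = k - r`. At most `binom(k+r, r) - 1 ≤ k^r` sets
`W ≠ S` of size `k` satisfy `A ⊆ W ⊆ S ∪ T`, so one of them has `ν W ≥ (ε / k^r) ν S`. Apply this
to the tilt of `μ` conditioned on `S ∩ T` whose field is `1` on `S`, `t` on `T \ S` and `0`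
elsewhere, where `t ^ |T \ S| = μ S / μ T`: then `S` and `T` have the same weight, and `W` yields
the exchange `U = S Δ W`. -/

theorem choose_add_le_pow_add_one {k r : ℕ} (h : r ≤ 1 ∨ 3 ≤ k) :
    (k + r).choose r ≤ k ^ r + 1 := by
  induction r with
  | zero => simp
  | succ m ih =>
    obtain rfl | hm := Nat.eq_zero_or_pos m
    · simp
    have hk : 3 ≤ k := by omega
    have hpow : k ≤ k ^ m := Nat.le_self_pow hm.ne' k
    have hgap : k + m + 2 ≤ (m + 1) * k := by nlinarith
    refine Nat.le_of_mul_le_mul_right ?_ m.succ_pos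
    calc (k + m + 1).choose (m + 1) * (m + 1)
        = (k + m + 1) * (k + m).choose m := (Nat.add_one_mul_choose_eq _ _).symm
      _ ≤ (k + m + 1) * (k ^ m + 1) := Nat.mul_le_mul_left _ (ih (.inr hk))
      _ ≤ (k ^ (m + 1) + 1) * (m + 1) := by
          rw [pow_succ]
          nlinarith [Nat.mul_le_mul_left (k ^ m) hgap]

theorem exists_le_mul_of_le_sum {ι R : Type*} [Semiring R] [LinearOrder R] [IsStrictOrderedRing R]
    {s : Finset ι} {f : ι → R} {a b : R} (ha : 0 < a) (hsum : a ≤ ∑ i ∈ s, f i)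
    (hcard : (#s : R) ≤ b) : ∃ i ∈ s, a ≤ b * f i := by
  have hs : s.Nonempty := nonempty_of_sum_ne_zero (ha.trans_le hsum).ne'
  obtain ⟨i, hi, hmax⟩ := exists_max_image s f hs
  have hle : a ≤ #s * f i := by
    simpa only [nsmul_eq_mul] using hsum.trans (sum_le_card_nsmul s f (f i) hmax)
  have hfi : 0 < f i := pos_of_mul_pos_right (ha.trans_le hle) (Nat.cast_nonneg _)
  exact ⟨i, hi, hle.trans (mul_le_mul_of_nonneg_right hcard hfi.le)⟩

section FiniteSets

variable {α : Type*} [DecidableEq α]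

theorem card_erase_filter_powersetCard_union_le {k r : ℕ} {A S T : Finset α} (hrk : r < k)
    (hS : #S = k) (hT : #T = k) (hA : A ∈ S.powersetCard (k - r)) :
    #({W ∈ (S ∪ T).powersetCard k | A ⊆ W}.erase S) ≤ k ^ r := by
  obtain ⟨hAS, hAcard⟩ := mem_powersetCard.1 hA
  have hS_mem : S ∈ {W ∈ (S ∪ T).powersetCard k | A ⊆ W} := by
    simp [hS, hAS, subset_union_left]
  have hunion : #(S ∪ T) - #A ≤ k + r := by
    have := card_union_le S T
    omega
  rw [card_erase_of_mem hS_mem,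
    card_filter_powersetCard_subset _ _ _ (hAS.trans subset_union_left) (by omega),
    show k - #A = r by omega, Nat.sub_le_iff_le_add]
  exact (Nat.choose_le_choose r hunion).trans (choose_add_le_pow_add_one (by omega))

theorem card_sdiff_pos_of_card_eq_of_ne {S T : Finset α} (hcard : #S = #T) (hne : S ≠ T) :
    0 < #(S \ T) := by
  rw [card_pos, sdiff_nonempty, subset_iff_eq_of_card_le hcard.ge]
  exact hne

end FiniteSets

section Tilt

variable {α : Type*} [DecidableEq α] {μ : Finset α → ℝ} {C S T W : Finset α} {t : ℝ}

/-- The tilt of the density `μ` by the external field `lam`, conditioned on the sets containing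
`C`. It is not normalised. -/
def tilt (μ : Finset α → ℝ) (C : Finset α) (lam : α → ℝ) (W : Finset α) : ℝ :=
  if C ⊆ W then μ W * ∏ i ∈ W, lam i else 0

/-- The external field that confines a tilt to the subsets of `S ∪ T` and gives weight `t` to each
element exchanged into `S`. -/
def exchangeField (S T : Finset α) (t : ℝ) (i : α) : ℝ :=
  if i ∈ S then 1 else if i ∈ T then t else 0

theorem tilt_nonneg {lam : α → ℝ} (hμ : 0 ≤ μ W) (hlam : ∀ i, 0 ≤ lam i) :
    0 ≤ tilt μ C lam W := by
  unfold tilt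
  split_ifs
  · exact mul_nonneg hμ (prod_nonneg fun i _ => hlam i)
  · exact le_rfl

theorem exchangeField_nonneg (ht : 0 ≤ t) (i : α) : 0 ≤ exchangeField S T t i := by
  unfold exchangeField
  split_ifs <;> simp [ht]

theorem prod_exchangeField (hW : W ⊆ S ∪ T) :
    ∏ i ∈ W, exchangeField S T t i = t ^ #(W \ S) := by
  have hfield : ∀ i ∈ W, exchangeField S T t i = if i ∈ S then 1 else t := fun i hi => by
    have := mem_union.1 (hW hi)
    unfold exchangeField
    split_ifs <;> tauto
  rw [prod_congr rfl hfield, prod_ite, prod_const_one, one_mul, prod_const, filter_notMem_eq_sdiff]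

theorem tilt_exchangeField (hCW : C ⊆ W) (hW : W ⊆ S ∪ T) :
    tilt μ C (exchangeField S T t) W = μ W * t ^ #(W \ S) := by
  rw [tilt, if_pos hCW, prod_exchangeField hW]

theorem subset_of_tilt_ne_zero {lam : α → ℝ} (h : tilt μ C lam W ≠ 0) : C ⊆ W := by
  by_contra hCW
  exact h (if_neg hCW)

theorem subset_union_of_tilt_exchangeField_ne_zero
    (h : tilt μ C (exchangeField S T t) W ≠ 0) : W ⊆ S ∪ T := by
  rw [tilt, if_pos (subset_of_tilt_ne_zero h)] at h
  intro i hi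
  have hfield := prod_ne_zero_iff.1 (right_ne_zero_of_mul h) i hi
  by_contra hST
  simp_all [exchangeField]

end Tilt

section DownUpWalk

variable {n k r : ℕ} {ε : ℝ} {ν : Finset (Fin n) → ℝ} {S T W : Finset (Fin n)}

theorem mem_kSets : S ∈ kSets n k ↔ #S = k := by
  simp [kSets]

theorem symmDiff_mem_exch (hcard : #W = #S) (hleft : S ∩ T ⊆ W) (hright : W ⊆ S ∪ T) :
    symmDiff S W ∈ exch S T #(W \ S) := by
  have hsub : symmDiff S W ⊆ symmDiff S T := by grind [mem_symmDiff]
  have hinterS : symmDiff S W ∩ S = S \ W := by grind [mem_symmDiff]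
  have hinterT : symmDiff S W ∩ T = W \ S := by grind [mem_symmDiff]
  simp only [exch, mem_filter, mem_powerset, hinterS, hinterT, and_true]
  exact ⟨hsub, card_sdiff_comm hcard.symm⟩

theorem ConductanceGE.le_sum_transP (h : ConductanceGE n k r ν ε) (hS : #S = k)
    (hνS : 0 < ν S) (hhalf : 2 * ν S ≤ ∑ W ∈ kSets n k, ν W) :
    ε ≤ ∑ S' ∈ kSets n k \ {S}, transP n k r ν S S' := by
  have hZ : 0 < ∑ W ∈ kSets n k, ν W := by linarith
  have hπ : 0 < piDist n k ν S := div_pos hνS hZ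
  have hπ_half : piDist n k ν S ≤ 1 / 2 := by
    rw [piDist, div_le_div_iff₀ hZ two_pos]
    linarith
  have hflow := h {S} (singleton_subset_iff.2 (mem_kSets.2 hS)) (by simpa using hπ)
    (by simpa using hπ_half)
  simp only [sum_singleton, ← mul_sum] at hflow
  rw [mul_comm] at hflow
  exact le_of_mul_le_mul_left hflow hπ

theorem sum_transP (n k r : ℕ) (ν : Finset (Fin n) → ℝ) (S : Finset (Fin n))
    (𝒮 : Finset (Finset (Fin n))) :
    ∑ S' ∈ 𝒮, transP n k r ν S S' = ∑ A ∈ S.powersetCard (k - r),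
      (k.choose (k - r) : ℝ)⁻¹ *
        ((∑ S' ∈ 𝒮 with A ⊆ S', ν S') / ∑ W ∈ kSets n k with A ⊆ W, ν W) := by
  simp only [transP, mul_div_assoc, sum_div, mul_sum]
  refine sum_comm' fun S' A => ?_
  simp only [mem_powersetCard, mem_filter, subset_inter_iff]
  tauto

theorem exists_core_of_le_sum_transP {𝒮 : Finset (Finset (Fin n))} (hS : #S = k)
    (h : ε ≤ ∑ S' ∈ 𝒮, transP n k r ν S S') :
    ∃ A ∈ S.powersetCard (k - r),
      ε ≤ (∑ S' ∈ 𝒮 with A ⊆ S', ν S') / ∑ W ∈ kSets n k with A ⊆ W, ν W := by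
  have hchoose : (0 : ℝ) < k.choose (k - r) := mod_cast Nat.choose_pos (k.sub_le r)
  have hcores : (S.powersetCard (k - r)).Nonempty :=
    powersetCard_nonempty.2 (hS ▸ k.sub_le r)
  have haverage : ∑ _A ∈ S.powersetCard (k - r), (k.choose (k - r) : ℝ)⁻¹ * ε = ε := by
    rw [sum_const, card_powersetCard, hS, nsmul_eq_mul, mul_inv_cancel_left₀ hchoose.ne']
  rw [sum_transP] at h
  obtain ⟨A, hA, hle⟩ := exists_le_of_sum_le hcores (haverage.trans_le h)
  exact ⟨A, hA, le_of_mul_le_mul_left hle (inv_pos.2 hchoose)⟩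

theorem ConductanceGE.exists_core (h : ConductanceGE n k r ν ε) (hε : 0 ≤ ε)
    (hν : ∀ W, #W = k → 0 ≤ ν W) (hS : #S = k) (hT : #T = k) (hST : S ≠ T)
    (hνS : 0 < ν S) (hνST : ν S ≤ ν T) :
    ∃ A ∈ S.powersetCard (k - r), ε * ν S ≤ ∑ W ∈ kSets n k \ {S} with A ⊆ W, ν W := by
  have hν_mem : ∀ W ∈ kSets n k, 0 ≤ ν W := fun W hW => hν W (mem_kSets.1 hW)
  have hhalf : 2 * ν S ≤ ∑ W ∈ kSets n k, ν W := by
    have hpair := add_le_sum hν_mem (mem_kSets.2 hS) (mem_kSets.2 hT) hST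
    linarith
  obtain ⟨A, hA, hescape⟩ := exists_core_of_le_sum_transP hS (h.le_sum_transP hS hνS hhalf)
  have hνS_le : ν S ≤ ∑ W ∈ kSets n k with A ⊆ W, ν W :=
    single_le_sum (fun W hW => hν_mem W (mem_filter.1 hW).1)
      (mem_filter.2 ⟨mem_kSets.2 hS, (mem_powersetCard.1 hA).1⟩)
  rw [le_div_iff₀ (hνS.trans_le hνS_le)] at hescape
  exact ⟨A, hA, (mul_le_mul_of_nonneg_left hνS_le hε).trans hescape⟩

theorem exists_neighbor_of_conductanceGE (hrk : r < k) (hε : 0 < ε)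
    (hν : ∀ W, #W = k → 0 ≤ ν W) (hsupp : ∀ W, ν W ≠ 0 → W ⊆ S ∪ T)
    (hS : #S = k) (hT : #T = k) (hST : S ≠ T) (hνS : 0 < ν S) (hνST : ν S ≤ ν T)
    (hcond : ConductanceGE n k r ν ε) :
    ∃ W, #W = k ∧ W ≠ S ∧ #(W \ S) ≤ r ∧ ε * ν S ≤ (k : ℝ) ^ r * ν W := by
  obtain ⟨A, hA, hmass⟩ := hcond.exists_core hε.le hν hS hT hST hνS hνST
  have hconfined : ∑ W ∈ kSets n k \ {S} with A ⊆ W, ν W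
      = ∑ W ∈ {W ∈ (S ∪ T).powersetCard k | A ⊆ W}.erase S, ν W := by
    refine (sum_subset (fun W hW => ?_) fun W hW hW' => ?_).symm
    · simp_all [mem_kSets]
    · by_contra hνW
      have := hsupp W hνW
      simp_all [mem_kSets]
  have hcount : (#({W ∈ (S ∪ T).powersetCard k | A ⊆ W}.erase S) : ℝ) ≤ (k : ℝ) ^ r :=
    mod_cast card_erase_filter_powersetCard_union_le hrk hS hT hA
  rw [hconfined] at hmass
  obtain ⟨W, hW, hνW⟩ := exists_le_mul_of_le_sum (mul_pos hε hνS) hmass hcount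
  simp only [mem_erase, mem_filter, mem_powersetCard] at hW
  obtain ⟨hWS, ⟨-, hWcard⟩, hAW⟩ := hW
  obtain ⟨hAS, hAcard⟩ := mem_powersetCard.1 hA
  have hdist : #(W \ S) ≤ r := by
    have := card_le_card (sdiff_subset_sdiff (le_refl W) hAS)
    rw [card_sdiff_of_subset hAW] at this
    omega
  exact ⟨W, hWcard, hWS, hdist, hνW⟩

theorem exists_exchange_of_conductanceGE_tilt {μ : Finset (Fin n) → ℝ} {t : ℝ} (hrk : r < k)
    (hε : 0 < ε) (hμ : ∀ W, #W = k → 0 ≤ μ W) (hS : #S = k) (hT : #T = k) (hST : S ≠ T)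
    (hμS : 0 < μ S) (ht : 0 ≤ t) (hbalance : μ S ≤ μ T * t ^ #(T \ S))
    (hcond : ConductanceGE n k r (tilt μ (S ∩ T) (exchangeField S T t)) ε) :
    ∃ s ∈ Icc 1 r, ∃ U ∈ exch S T s, μ S ≤ (k : ℝ) ^ r / ε * μ (symmDiff S U) * t ^ s := by
  have hνS : tilt μ (S ∩ T) (exchangeField S T t) S = μ S := by
    simp [tilt_exchangeField inter_subset_left subset_union_left]
  have hνT : tilt μ (S ∩ T) (exchangeField S T t) T = μ T * t ^ #(T \ S) :=
    tilt_exchangeField inter_subset_right subset_union_right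
  obtain ⟨W, hW, hWS, hWr, hνW⟩ := exists_neighbor_of_conductanceGE hrk hε
    (fun W hW => tilt_nonneg (hμ W hW) (exchangeField_nonneg ht))
    (fun W => subset_union_of_tilt_exchangeField_ne_zero)
    hS hT hST (hνS.symm ▸ hμS) (hνS.trans_le (hbalance.trans_eq hνT.symm)) hcond
  have hνW_ne : tilt μ (S ∩ T) (exchangeField S T t) W ≠ 0 := by
    intro h
    rw [h, hνS, mul_zero] at hνW
    exact (mul_pos hε hμS).not_ge hνW
  have hleft := subset_of_tilt_ne_zero hνW_ne
  have hright := subset_union_of_tilt_exchangeField_ne_zero hνW_ne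
  have hWS_pos : 0 < #(W \ S) := card_sdiff_pos_of_card_eq_of_ne (hW.trans hS.symm) hWS
  refine ⟨#(W \ S), mem_Icc.2 ⟨hWS_pos, hWr⟩, symmDiff S W,
    symmDiff_mem_exch (hW.trans hS.symm) hleft hright, ?_⟩
  rw [hνS, tilt_exchangeField hleft hright] at hνW
  rw [symmDiff_symmDiff_cancel_left, div_mul_eq_mul_div, div_mul_eq_mul_div, le_div_iff₀ hε,
    mul_comm (μ S), mul_assoc]
  exact hνW

end DownUpWalk

/-- If all down-up walks on conditioned external-field tilts of `μ` have conductance at least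
`ε`, then `μ` satisfies weak `(r, k^r/ε)`-approximate exchange. -/
theorem fast_mixing_implies_weak_exchange
    (n k r : ℕ) (ε : ℝ)
    (hk : 1 ≤ k) (hkn : k ≤ n) (hr : 1 ≤ r) (hrk : r < k)
    (hε : 0 < ε) (hε1 : ε ≤ 1)
    (μ : Finset (Fin n) → ℝ)
    (hμnonneg : ∀ S : Finset (Fin n), S.card = k → 0 ≤ μ S)
    (hμnontriv : ∃ S : Finset (Fin n), S.card = k ∧ μ S ≠ 0)
    (hcond : ∀ lam : Fin n → ℝ, (∀ i, 0 ≤ lam i) → ∀ C : Finset (Fin n),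
      (∃ W : Finset (Fin n), W.card = k ∧
        (if C ⊆ W then μ W * ∏ i ∈ W, lam i else 0) ≠ 0) →
      ConductanceGE n k r (fun W => if C ⊆ W then μ W * ∏ i ∈ W, lam i else 0) ε) :
    ∀ S T : Finset (Fin n), S.card = k → T.card = k → 0 < μ S → 0 < μ T → S ≠ T →
      ∃ s ∈ Finset.Icc 1 r, ∃ U ∈ exch S T s,
        μ S ≤ ((k : ℝ) ^ r / ε) * μ (symmDiff S U) *
          (μ S / μ T) ^ ((s : ℝ) / ((S \ T).card : ℝ)) := by
  intro S T hS hT hμS hμT hST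
  have hratio : 0 ≤ μ S / μ T := (div_pos hμS hμT).le
  have hd : #(S \ T) ≠ 0 := (card_sdiff_pos_of_card_eq_of_ne (hS.trans hT.symm) hST).ne'
  set t : ℝ := (μ S / μ T) ^ ((#(S \ T) : ℝ)⁻¹) with ht_def
  have ht : 0 ≤ t := Real.rpow_nonneg hratio _
  have hbalance : μ S = μ T * t ^ #(T \ S) := by
    rw [card_sdiff_comm (hT.trans hS.symm), Real.rpow_inv_natCast_pow hratio hd,
      mul_div_cancel₀ _ hμT.ne']
  have htilt : tilt μ (S ∩ T) (exchangeField S T t) S ≠ 0 := by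
    simpa [tilt_exchangeField inter_subset_left subset_union_left] using hμS.ne'
  obtain ⟨s, hs, U, hU, hle⟩ := exists_exchange_of_conductanceGE_tilt hrk hε hμnonneg hS hT hST
    hμS ht hbalance.le (hcond _ (exchangeField_nonneg ht) _ ⟨S, hS, htilt⟩)
  have ht_pow : t ^ s = (μ S / μ T) ^ ((s : ℝ) / #(S \ T)) := by
    rw [ht_def, ← Real.rpow_mul_natCast hratio, inv_mul_eq_div]
  exact ⟨s, hs, U, hU, ht_pow ▸ hle⟩
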